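/- Let N ≥ 2 and take k = 2 and d = 2, and set r = 1, s = 0, t = 1. Then r·(k−1) − s·(N−k+1) − t = 0; for every coordinate index 1 ≤ m ≤ N and every monomial x₁^{i₁}⋯x_N^{i_N} having nonzero coefficient in the m-th coordinate polynomial f_m of the generalized Hénon map f_P, the conjugation weight e_m(i) := w_m − Σ_{j=1}^{N} i_j·w_j + (2 − Σ_j i_j)·t is ≥ 0; and the weight of the monomial x₁ occurring in f_N equals exactly 0. (By the Hilbert–Mumford numerical criterion, this witnesses that the homogenization of f_P is not SL_{N+1}-stable.) -/

import Mathlib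

/-!
With `k = d = 2` and `(r, s, t) = (1, 0, 1)` only `x₁` has nonzero weight, namely `1`, so the
conjugation weight of a monomial with exponent `i` in the `m`-th coordinate is
`w m - i 1 + (2 - ∑ j, i j)` (`sum_mul_weight`), where `w m ≥ 0`.  A linear monomial has degree one
and contains `x₁` at most once, so its weight is at least `0`.  A monomial of `P (m + 1)` avoids
`x₁` and has degree at most two, so its weight is at least `0` (`weight_bound_of_coeff_ne_zero`).
The monomial `x₁` of the last coordinate has weight `0 - 1 + (2 - 1) = 0`; it is not cancelled by
`P (N + 1)`, which does not involve `x₁`.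
-/

open MvPolynomial

/-- A weight function that is `1` at `1` and vanishes at the other indices picks out the exponent
of `x₁`. -/
lemma sum_mul_weight {N : ℕ} (hN : 1 ≤ N) (w : ℕ → ℤ) (hw1 : w 1 = 1)
    (hw0 : ∀ j, 2 ≤ j → j ≤ N → w j = 0) (i : ℕ →₀ ℕ) :
    ∑ j ∈ Finset.Icc 1 N, (i j : ℤ) * w j = i 1 := by
  rw [Finset.sum_eq_single 1]
  · simp [hw1]
  · intro j hj hj1
    rw [Finset.mem_Icc] at hj
    rw [hw0 j (by omega) hj.2, mul_zero]
  · intro h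
    exact absurd (Finset.mem_Icc.2 ⟨le_rfl, hN⟩) h

lemma coeff_eq_zero_of_notMem_vars {K : Type*} [Field K] {p : MvPolynomial ℕ K} {j : ℕ}
    (hj : j ∉ p.vars) {i : ℕ →₀ ℕ} (hi : i j ≠ 0) : coeff i p = 0 := by
  by_contra h
  exact hj ((mem_vars_iff_mem_support j).2 ⟨i, mem_support_iff.2 h, Finsupp.mem_support_iff.2 hi⟩)

lemma sum_exponents_le_totalDegree {K : Type*} [Field K] {p : MvPolynomial ℕ K} (N : ℕ)
    {i : ℕ →₀ ℕ} (hi : coeff i p ≠ 0) :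
    ∑ j ∈ Finset.Icc 1 N, (i j : ℤ) ≤ p.totalDegree := by
  have h := le_totalDegree (mem_support_iff.2 hi)
  have h2 : ∑ j ∈ Finset.Icc 1 N, i j ≤ i.sum fun _ e => e :=
    Finset.sum_le_sum_of_ne_zero fun j _ hj => Finsupp.mem_support_iff.2 hj
  exact_mod_cast h2.trans h

/-- The weight estimate for a polynomial of degree at most two free of `x₁`, as needed for
coordinates of weight `w m ≥ 0`. -/
lemma weight_bound_of_coeff_ne_zero {K : Type*} [Field K] {p : MvPolynomial ℕ K} (N : ℕ)
    (hvars : 1 ∉ p.vars) (hdeg : p.totalDegree ≤ 2) {i : ℕ →₀ ℕ} (hi : coeff i p ≠ 0) :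
    (i 1 : ℤ) + ∑ j ∈ Finset.Icc 1 N, (i j : ℤ) ≤ 2 := by
  have h1 : i 1 = 0 := by
    by_contra h
    exact hi (coeff_eq_zero_of_notMem_vars hvars h)
  have h2 := sum_exponents_le_totalDegree N hi
  rw [h1]
  omega

lemma eq_single_of_coeff_C_mul_X_ne_zero {K : Type*} [Field K] {a : K} {n : ℕ} {i : ℕ →₀ ℕ}
    (hi : coeff i (C a * X n : MvPolynomial ℕ K) ≠ 0) : i = Finsupp.single n 1 := by
  by_contra h
  apply hi
  rw [coeff_C_mul, coeff_X, if_neg (Ne.symm h), mul_zero]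

lemma sum_single_le_one (N n : ℕ) :
    ∑ j ∈ Finset.Icc 1 N, ((Finsupp.single n 1 : ℕ →₀ ℕ) j : ℤ) ≤ 1 := by
  simp only [Finsupp.single_apply, Nat.cast_ite, Nat.cast_one, Nat.cast_zero, Finset.sum_ite_eq]
  split_ifs <;> simp

/-- **Non-stability of generalized Hénon maps for `k = d = 2`.**
Let `N ≥ 2`, `k = 2`, `d = 2`, and take `r = 1`, `s = 0`, `t = 1`.  Then
`r(k-1) - s(N-k+1) - t = 0`; every monomial with nonzero coefficient in a coordinate
polynomial `f m` of the generalized Hénon map has conjugation weight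
`e_m(i) = w_m - ∑ i_j w_j + (2 - ∑ i_j) t ≥ 0`; and the monomial `x₁` occurring in `f N`
has weight exactly `0`. -/
theorem henon_not_stable_weights {K : Type*} [Field K] [CharZero K]
    (N k d : ℕ) (hk2 : 2 ≤ k) (hkN : k ≤ N) (hd2 : 2 ≤ d) (hk : k = 2) (hd : d = 2)
    (b : ℕ → K) (hb : ∀ j, 1 ≤ j → j ≤ N → b j ≠ 0)
    (P : ℕ → MvPolynomial ℕ K)
    (hPvars : ∀ i, k ≤ i → i ≤ N → ∀ j ∈ (P (i + 1)).vars, k ≤ j ∧ j ≤ i)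
    (hPdeg : ∀ i, k ≤ i → i ≤ N → (P (i + 1)).totalDegree ≤ d)
    (hPmax : ∃ i, k ≤ i ∧ i ≤ N ∧ (P (i + 1)).totalDegree = d)
    (f : ℕ → MvPolynomial ℕ K)
    (hf1 : ∀ m, 1 ≤ m → m ≤ k - 1 → f m = C (b (m + 1)) * X (m + 1))
    (hf2 : ∀ m, k ≤ m → m ≤ N - 1 → f m = C (b (m + 1)) * X (m + 1) + P (m + 1))
    (hfN : f N = C (b 1) * X 1 + P (N + 1))
    (r s t : ℤ) (hr : r = 1) (hs : s = 0) (ht : t = 1)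
    (w : ℕ → ℤ) (hw : ∀ j, 1 ≤ j → j ≤ N → w j = if j ≤ k - 1 then r else -s) :
    r * ((k : ℤ) - 1) - s * ((N : ℤ) - (k : ℤ) + 1) - t = 0 ∧
    (∀ m, 1 ≤ m → m ≤ N → ∀ i : ℕ →₀ ℕ, coeff i (f m) ≠ 0 →
      0 ≤ w m - (∑ j ∈ Finset.Icc 1 N, (i j : ℤ) * w j) +
        ((2 : ℤ) - ∑ j ∈ Finset.Icc 1 N, (i j : ℤ)) * t) ∧
    (coeff (Finsupp.single 1 1) (f N) ≠ 0 ∧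
      w N - (∑ j ∈ Finset.Icc 1 N, ((Finsupp.single 1 1 : ℕ →₀ ℕ) j : ℤ) * w j) +
        ((2 : ℤ) - ∑ j ∈ Finset.Icc 1 N, ((Finsupp.single 1 1 : ℕ →₀ ℕ) j : ℤ)) * t = 0) := by
  subst hk hd hr hs ht
  have hw1 : w 1 = 1 := by simp [hw 1 le_rfl (by omega)]
  have hw0 : ∀ j, 2 ≤ j → j ≤ N → w j = 0 := by
    intro j h2 hj
    rw [hw j (by omega) hj, if_neg (by omega), neg_zero]
  have hS := sum_mul_weight (by omega : 1 ≤ N) w hw1 hw0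
  have hP1 : ∀ m, 2 ≤ m → m ≤ N → 1 ∉ (P (m + 1)).vars := by
    intro m h2 hm h
    have := hPvars m h2 hm 1 h
    omega
  have hPb : ∀ m, 2 ≤ m → m ≤ N → ∀ i : ℕ →₀ ℕ, coeff i (P (m + 1)) ≠ 0 →
      (i 1 : ℤ) + ∑ j ∈ Finset.Icc 1 N, (i j : ℤ) ≤ 2 := fun m h2 hm i hi =>
    weight_bound_of_coeff_ne_zero N (hP1 m h2 hm) (hPdeg m h2 hm) hi
  -- A linear monomial has `i 1 ≤ 1` and degree at most one, whatever its variable.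
  have hL : ∀ (a : K) (n : ℕ) (i : ℕ →₀ ℕ), coeff i (C a * X n : MvPolynomial ℕ K) ≠ 0 →
      (i 1 : ℤ) + ∑ j ∈ Finset.Icc 1 N, (i j : ℤ) ≤ 2 := by
    intro a n i hi
    rw [eq_single_of_coeff_C_mul_X_ne_zero hi]
    have h1 := sum_single_le_one N n
    have h2 : (Finsupp.single n 1 : ℕ →₀ ℕ) 1 ≤ 1 := by
      rw [Finsupp.single_apply]
      split_ifs <;> simp
    omega
  have hsum : ∀ (p q : MvPolynomial ℕ K) (i : ℕ →₀ ℕ), coeff i (p + q) ≠ 0 →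
      coeff i p ≠ 0 ∨ coeff i q ≠ 0 := by
    intro p q i h
    by_contra! hc
    exact h (by rw [coeff_add, hc.1, hc.2, add_zero])
  refine ⟨by norm_num, ?_, ?_, ?_⟩
  · intro m hm1 hmN i hi
    have hwm : 0 ≤ w m := by
      rcases Nat.lt_or_ge m 2 with h | h
      · obtain rfl : m = 1 := by omega
        omega
      · rw [hw0 m h hmN]
    have key : (i 1 : ℤ) + ∑ j ∈ Finset.Icc 1 N, (i j : ℤ) ≤ 2 := by
      rcases Nat.lt_or_ge m 2 with h | h
      · rw [hf1 m hm1 (by omega)] at hi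
        exact hL _ _ i hi
      · rcases Nat.lt_or_ge m N with h' | h'
        · rw [hf2 m h (by omega)] at hi
          exact (hsum _ _ i hi).elim (hL _ _ i) (hPb m h hmN i)
        · obtain rfl : m = N := by omega
          rw [hfN] at hi
          exact (hsum _ _ i hi).elim (hL _ _ i) (hPb m h hmN i)
    rw [hS i]
    linarith
  · rw [hfN, coeff_add, coeff_C_mul, coeff_X, if_pos rfl,
      coeff_eq_zero_of_notMem_vars (hP1 N hkN le_rfl) (by simp), mul_one, add_zero]
    exact hb 1 le_rfl (by omega)
  · have h1 : ∑ j ∈ Finset.Icc 1 N, ((Finsupp.single 1 1 : ℕ →₀ ℕ) j : ℤ) = 1 := by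
      simp only [Finsupp.single_apply, Nat.cast_ite, Nat.cast_one, Nat.cast_zero,
        Finset.sum_ite_eq]
      rw [if_pos (Finset.mem_Icc.2 ⟨le_rfl, by omega⟩)]
    rw [hS, h1, hw0 N hkN le_rfl, Finsupp.single_eq_same]
    norm_num
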